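/- Let 0 < r ≤ 1 ≤ R and τ > 0, let λ be one of the four phases λ_{ε₁,ε₂}, and define, for ξ with ξ_h ≠ 0, M(τ,ξ) = [1/(1 + τ|a_λ(ξ)|²) + i (∂_{ξ₂} a_λ(ξ)) (1 − τ|a_λ(ξ)|²)/(1 + τ|a_λ(ξ)|²)²] Ψ_{r,R}(ξ) + (i a_λ(ξ)/(1 + τ|a_λ(ξ)|²)) ∂_{ξ₂} Ψ_{r,R}(ξ). Then there exists a constant C > 0, depending only on γ̄ and ψ, such that for all such ξ, |M(τ,ξ)| ≤ C r^{−1} / (1 + R^{−6} r² τ ξ₂²). -/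

import Mathlib

/- Common setup: the space ℝ³ (as a Euclidean space), Fourier transform,
   partial derivatives, Sobolev-type norms. -/

noncomputable section

open MeasureTheory Real Complex Filter ENNReal

/-- The space `ℝ³`. -/
abbrev E3 : Type := EuclideanSpace ℝ (Fin 3)

/-- Fourier transform on `ℝ³`. -/
def FT (f : E3 → ℂ) : E3 → ℂ := FourierTransform.fourier f

/-- Inverse Fourier transform on `ℝ³`. -/
def FTinv (f : E3 → ℂ) : E3 → ℂ := FourierTransformInv.fourierInv f

/-- The point `(x₁, x₂, x₃) ∈ ℝ³`. -/
def pt (x1 x2 x3 : ℝ) : E3 := (EuclideanSpace.equiv (Fin 3) ℝ).symm ![x1, x2, x3]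

/-- Fourier transform of a real-valued function. -/
def FTr (f : E3 → ℝ) : E3 → ℂ := FT (fun x => (f x : ℂ))

/-- Partial derivative `∂ᵢ` of a real-valued function. -/
def pd (i : Fin 3) (f : E3 → ℝ) (x : E3) : ℝ := fderiv ℝ f x (EuclideanSpace.single i 1)

/-- Partial derivative `∂ᵢ` of a complex-valued function. -/
def pdC (i : Fin 3) (f : E3 → ℂ) (x : E3) : ℂ := fderiv ℝ f x (EuclideanSpace.single i 1)

/-- A smooth cut-off function `ψ` with values in `[0,1]`, equal to `1` on `(-∞,1]`
and to `0` on `[2,∞)`. -/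
def IsCutoff (ψ : ℝ → ℝ) : Prop :=
  ContDiff ℝ (⊤ : ℕ∞) ψ ∧ (∀ x, ψ x ∈ Set.Icc (0:ℝ) 1) ∧ (∀ x ≤ (1:ℝ), ψ x = 1) ∧
    (∀ x, (2:ℝ) ≤ x → ψ x = 0)

/-- The norm `|ξ_h|` of the horizontal component of a frequency `ξ`. -/
def xih (ξ : E3) : ℝ := Real.sqrt (ξ 0 ^ 2 + ξ 1 ^ 2)

/-- The frequency cut-off function `Ψ_{r,R}`. -/
def Psi (ψ : ℝ → ℝ) (r R : ℝ) (ξ : E3) : ℝ :=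
  ψ (‖ξ‖ / R) * ((1 - ψ (xih ξ / r)) * (1 - ψ (|ξ 2| / r)))

/-- The set `C_{r,R} = {ξ : |ξ| ≤ R, |ξ_h| ≥ r, |ξ₃| ≥ r}`. -/
def CrR (r R : ℝ) : Set E3 := {ξ | ‖ξ‖ ≤ R ∧ r ≤ xih ξ ∧ r ≤ |ξ 2|}

/-- The frequency cut-off operator `Ψ_{r,R}(D) g = 𝓕⁻¹(Ψ_{r,R} ĝ)`. -/
def PsiD (ψ : ℝ → ℝ) (r R : ℝ) (g : E3 → ℂ) : E3 → ℂ :=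
  FTinv (fun ξ => (Psi ψ r R ξ : ℂ) * FT g ξ)

/-- The eigenvalues `λ_{ε₁,ε₂}(ξ)` of `B̂(ξ)`. -/
def lamEV (γ ε1 ε2 : ℝ) (ξ : E3) : ℂ :=
  (ε1 : ℂ) * (Complex.I / 2) *
    (((Real.sqrt (1 + γ ^ 2 * ‖ξ‖ ^ 2 + 2 * γ * ξ 2) +
      ε2 * Real.sqrt (1 + γ ^ 2 * ‖ξ‖ ^ 2 - 2 * γ * ξ 2)) : ℝ) : ℂ)

/-- The derivative `a_λ(ξ) = ∂_{ξ₂} λ_{ε₁,ε₂}(ξ) = ε₁ (iγ̄²ξ₂/2)(1/A(ξ) + ε₂/B(ξ))`. -/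
def aLam (γ ε1 ε2 : ℝ) (ξ : E3) : ℂ :=
  (ε1 : ℂ) * (Complex.I * ((γ ^ 2 * ξ 1 : ℝ) : ℂ) / 2) *
    (((1 / Real.sqrt (1 + γ ^ 2 * ‖ξ‖ ^ 2 + 2 * γ * ξ 2) +
      ε2 / Real.sqrt (1 + γ ^ 2 * ‖ξ‖ ^ 2 - 2 * γ * ξ 2)) : ℝ) : ℂ)

/-- The quantity `M(τ,ξ) = [1/(1+τ|a_λ|²) + i(∂_{ξ₂}a_λ)(1−τ|a_λ|²)/(1+τ|a_λ|²)²] Ψ_{r,R}(ξ)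
+ (i a_λ/(1+τ|a_λ|²)) ∂_{ξ₂}Ψ_{r,R}(ξ)`. -/
def Mker (ψ : ℝ → ℝ) (r R γ ε1 ε2 τ : ℝ) (ξ : E3) : ℂ :=
  (((1 / (1 + τ * ‖aLam γ ε1 ε2 ξ‖ ^ 2) : ℝ) : ℂ) +
      Complex.I * (fderiv ℝ (aLam γ ε1 ε2) ξ (EuclideanSpace.single 1 1)) *
        (((1 - τ * ‖aLam γ ε1 ε2 ξ‖ ^ 2) /
          (1 + τ * ‖aLam γ ε1 ε2 ξ‖ ^ 2) ^ 2 : ℝ) : ℂ)) * ((Psi ψ r R ξ : ℝ) : ℂ) +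
    Complex.I * aLam γ ε1 ε2 ξ / (((1 + τ * ‖aLam γ ε1 ε2 ξ‖ ^ 2 : ℝ)) : ℂ) *
      ((fderiv ℝ (Psi ψ r R) ξ (EuclideanSpace.single 1 1) : ℝ) : ℂ)

/-! Writing `e₂`, `e₃` for the basis vectors, `1 + γ²|ξ|² ± 2γξ₃ = |γξ ± e₃|²`, so that, up to a
factor of modulus one, `a_λ` is `γ/2` times the sum or the difference of the direction cosines of
`γξ + e₃` and `γξ - e₃` along `e₂`. A direction cosine is at most `1`, and its derivative along its
own axis is at most the inverse of the length of the vector; hence `|a_λ| ≤ γ` and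
`|∂₂ a_λ| ≤ γ / |ξ_h|`. In the other direction, the inverse lengths of `γξ + e₃` and `γξ - e₃`
differ by a multiple of `ξ₃`, which yields `γ³ |ξ₂| |ξ₃| / (1 + γ|ξ|)³ ≤ |a_λ|`. On the support of
`Ψ_{r,R}` this is at least `c r R⁻³ |ξ₂|`, the source of the decay in `τ`; the factor `r⁻¹` comes
from the derivatives of `a_λ` and of the cut-off. -/

section DirectionCosine

variable {E : Type*} [NormedAddCommGroup E] [InnerProductSpace ℝ E] {v x : E}

/-- The direction cosine `⟪v, x⟫ / ‖x‖` of `x` along `v`, for a unit vector `v`; it is extended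
linearly to all `v` and takes the value `0` at `x = 0`. -/
def dirCos (v x : E) : ℝ := inner ℝ v x / ‖x‖

lemma abs_dirCos_le (v x : E) : |dirCos v x| ≤ ‖v‖ := by
  rw [dirCos, abs_div, abs_norm]
  exact div_le_of_le_mul₀ (norm_nonneg x) (norm_nonneg v) (abs_real_inner_le_norm v x)

lemma hasFDerivAt_norm_of_ne_zero (hx : x ≠ 0) :
    HasFDerivAt (fun y : E => ‖y‖) (‖x‖⁻¹ • innerSL ℝ x) x := by
  have hsqrt := (hasStrictFDerivAt_norm_sq x).hasFDerivAt.sqrt (by positivity)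
  simp only [Real.sqrt_sq (norm_nonneg _)] at hsqrt
  convert hsqrt using 1
  module

lemma hasFDerivAt_dirCos (v : E) (hx : x ≠ 0) :
    HasFDerivAt (dirCos v)
      (‖x‖⁻¹ • innerSL ℝ v - (inner ℝ v x / ‖x‖ ^ 3) • innerSL ℝ x) x := by
  have hinv := (hasDerivAt_inv (norm_ne_zero_iff.mpr hx)).comp_hasFDerivAt x
    (hasFDerivAt_norm_of_ne_zero hx)
  refine ((innerSL ℝ v).hasFDerivAt.mul hinv).congr_fderiv ?_
  simp only [innerSL_apply_apply, Function.comp_apply]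
  match_scalars <;> field_simp

lemma fderiv_dirCos_self (hx : x ≠ 0) :
    fderiv ℝ (dirCos v) x v = (‖v‖ ^ 2 - dirCos v x ^ 2) / ‖x‖ := by
  rw [(hasFDerivAt_dirCos v hx).fderiv]
  simp only [dirCos, FunLike.coe_smul, FunLike.coe_sub, Pi.smul_apply, Pi.sub_apply,
    innerSL_apply_apply, smul_eq_mul, real_inner_self_eq_norm_sq, real_inner_comm v x]
  field_simp

lemma abs_fderiv_dirCos_self_le (hx : x ≠ 0) :
    |fderiv ℝ (dirCos v) x v| ≤ ‖v‖ ^ 2 / ‖x‖ := by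
  have hcos : dirCos v x ^ 2 ≤ ‖v‖ ^ 2 := sq_le_sq' (abs_le.mp (abs_dirCos_le v x)).1
    (abs_le.mp (abs_dirCos_le v x)).2
  rw [fderiv_dirCos_self hx, abs_of_nonneg (div_nonneg (sub_nonneg.mpr hcos) (norm_nonneg x))]
  gcongr
  exact sub_le_self _ (sq_nonneg _)

lemma differentiableAt_dirCos_smul_add {γ : ℝ} {e : E} (v : E) (h : γ • x + e ≠ 0) :
    DifferentiableAt ℝ (fun y => dirCos v (γ • y + e)) x :=
  (hasFDerivAt_dirCos v h).differentiableAt.comp x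
    ((differentiableAt_id.const_smul γ).add_const e)

lemma abs_fderiv_dirCos_smul_add_le {γ : ℝ} {e : E} (h : γ • x + e ≠ 0) :
    |fderiv ℝ (fun y => dirCos v (γ • y + e)) x v| ≤ |γ| * (‖v‖ ^ 2 / ‖γ • x + e‖) := by
  rw [fderiv_comp_smul (f := fun z => dirCos v (z + e)), fderiv_comp_add_right,
    FunLike.coe_smul, Pi.smul_apply, smul_eq_mul, abs_mul]
  gcongr
  exact abs_fderiv_dirCos_self_le h

lemma le_abs_inv_norm_add_sub_inv_norm_sub {e : E} (hadd : x + e ≠ 0) (hsub : x - e ≠ 0) :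
    2 * |inner ℝ x e| / (‖x‖ + ‖e‖) ^ 3 ≤ |‖x + e‖⁻¹ - ‖x - e‖⁻¹| := by
  have ha : 0 < ‖x + e‖ := norm_pos_iff.mpr hadd
  have hb : 0 < ‖x - e‖ := norm_pos_iff.mpr hsub
  have ha_le : ‖x + e‖ ≤ ‖x‖ + ‖e‖ := norm_add_le x e
  have hb_le : ‖x - e‖ ≤ ‖x‖ + ‖e‖ := norm_sub_le x e
  have hpolar : ‖x + e‖ ^ 2 - ‖x - e‖ ^ 2 = 4 * inner ℝ x e := by
    rw [norm_add_sq_real, norm_sub_sq_real]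
    ring
  have hdiff : ‖x + e‖⁻¹ - ‖x - e‖⁻¹ =
      -(4 * inner ℝ x e) / (‖x + e‖ * ‖x - e‖ * (‖x + e‖ + ‖x - e‖)) := by
    rw [← hpolar]
    field_simp
    ring
  calc 2 * |inner ℝ x e| / (‖x‖ + ‖e‖) ^ 3
      = 4 * |inner ℝ x e| /
          ((‖x‖ + ‖e‖) * (‖x‖ + ‖e‖) * ((‖x‖ + ‖e‖) + (‖x‖ + ‖e‖))) := by
        have : ‖x‖ + ‖e‖ ≠ 0 := (ha.trans_le ha_le).ne'
        field_simp
        ring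
    _ ≤ 4 * |inner ℝ x e| / (‖x + e‖ * ‖x - e‖ * (‖x + e‖ + ‖x - e‖)) := by gcongr
    _ = |‖x + e‖⁻¹ - ‖x - e‖⁻¹| := by
        rw [hdiff, abs_div, abs_neg, abs_mul, abs_of_pos (four_pos : (0 : ℝ) < 4),
          abs_of_pos (mul_pos (mul_pos ha hb) (add_pos ha hb))]

end DirectionCosine

section Lipschitz

open scoped NNReal

lemma exists_lipschitzWith_of_hasCompactSupport_deriv {F : Type*} [NormedAddCommGroup F]
    [NormedSpace ℝ F] {f : ℝ → F} (hf : ContDiff ℝ 1 f) (hsupp : HasCompactSupport (deriv f)) :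
    ∃ K, LipschitzWith K f := by
  obtain ⟨C, hC⟩ := (hf.continuous_deriv le_rfl).bounded_above_of_compact_support hsupp
  exact ⟨C.toNNReal, lipschitzWith_of_nnnorm_deriv_le (hf.differentiable one_ne_zero)
    fun x => NNReal.le_toNNReal_of_coe_le (hC x)⟩

lemma lipschitzWith_mul_of_norm_le_one {α 𝕜 : Type*} [PseudoMetricSpace α]
    [NonUnitalSeminormedRing 𝕜] {f g : α → 𝕜} {K L : ℝ≥0} (hf : LipschitzWith K f)
    (hg : LipschitzWith L g) (hf1 : ∀ x, ‖f x‖ ≤ 1) (hg1 : ∀ x, ‖g x‖ ≤ 1) :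
    LipschitzWith (K + L) fun x => f x * g x := by
  refine LipschitzWith.of_dist_le_mul fun x y => ?_
  have hsplit : f x * g x - f y * g y = (f x - f y) * g x + f y * (g x - g y) := by noncomm_ring
  calc dist (f x * g x) (f y * g y)
      ≤ ‖(f x - f y) * g x‖ + ‖f y * (g x - g y)‖ := by
        rw [dist_eq_norm, hsplit]
        exact norm_add_le _ _
    _ ≤ ‖f x - f y‖ * 1 + 1 * ‖g x - g y‖ :=
        add_le_add (norm_mul_le_of_le le_rfl (hg1 x)) (norm_mul_le_of_le (hf1 y) le_rfl)
    _ ≤ K * dist x y + L * dist x y := by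
        rw [mul_one, one_mul, ← dist_eq_norm, ← dist_eq_norm]
        exact add_le_add (hf.dist_le_mul x y) (hg.dist_le_mul x y)
    _ = (K + L : ℝ≥0) * dist x y := by rw [NNReal.coe_add, add_mul]

lemma lipschitzWith_comp_div {α : Type*} [PseudoMetricSpace α] {φ : ℝ → ℝ} {g : α → ℝ}
    {K : ℝ≥0} (hφ : LipschitzWith K φ) (hg : LipschitzWith 1 g) (s : ℝ) :
    LipschitzWith (K * ‖s⁻¹‖₊) fun x => φ (g x / s) := by
  have hdiv : LipschitzWith ‖s⁻¹‖₊ fun x => g x / s := by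
    simpa only [smul_eq_mul, Function.comp_def, div_eq_inv_mul, mul_one] using
      (lipschitzWith_smul s⁻¹).comp hg
  exact hφ.comp hdiv

end Lipschitz

section Horizontal

lemma xih_eq_norm (ξ : E3) : xih ξ = ‖!₂[ξ 0, ξ 1]‖ := by
  simp [xih, EuclideanSpace.norm_eq]

lemma xih_le_norm (ξ : E3) : xih ξ ≤ ‖ξ‖ := by
  rw [xih, EuclideanSpace.norm_eq, Fin.sum_univ_three]
  simp only [Real.norm_eq_abs, sq_abs]
  exact Real.sqrt_le_sqrt (le_add_of_nonneg_right (sq_nonneg _))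

lemma lipschitzWith_xih : LipschitzWith 1 xih := by
  refine LipschitzWith.of_dist_le_mul fun ξ η => ?_
  rw [NNReal.coe_one, one_mul, Real.dist_eq, dist_eq_norm]
  calc |xih ξ - xih η| ≤ ‖!₂[ξ 0, ξ 1] - !₂[η 0, η 1]‖ := by
        rw [xih_eq_norm, xih_eq_norm]
        exact abs_norm_sub_norm_le _ _
    _ = xih (ξ - η) := by simp [xih, EuclideanSpace.norm_eq]
    _ ≤ ‖ξ - η‖ := xih_le_norm _

lemma lipschitzWith_abs_apply {ι : Type*} [Fintype ι] (i : ι) :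
    LipschitzWith 1 fun ξ : EuclideanSpace ℝ ι => |ξ i| := by
  refine LipschitzWith.of_dist_le_mul fun ξ η => ?_
  rw [NNReal.coe_one, one_mul, Real.dist_eq, dist_eq_norm]
  exact (abs_abs_sub_abs_le _ _).trans (PiLp.norm_apply_le (ξ - η) i)

end Horizontal

section Cutoff

open scoped NNReal

lemma exists_lipschitzWith_of_isCutoff {ψ : ℝ → ℝ} (hψ : IsCutoff ψ) :
    ∃ K, LipschitzWith K ψ := by
  obtain ⟨hsmooth, -, hone, hzero⟩ := hψ
  refine exists_lipschitzWith_of_hasCompactSupport_deriv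
    (hsmooth.of_le (by exact_mod_cast le_top))
    (HasCompactSupport.intro (isCompact_Icc (a := (1 : ℝ)) (b := 2)) fun x hx => ?_)
  rw [Set.mem_Icc, not_and_or, not_le, not_le] at hx
  rcases hx with hx | hx
  · have hconst : ψ =ᶠ[nhds x] fun _ => 1 :=
      Filter.mem_of_superset (Iio_mem_nhds hx) fun y hy => hone y (le_of_lt hy)
    rw [hconst.deriv_eq, deriv_const]
  · have hconst : ψ =ᶠ[nhds x] fun _ => 0 :=
      Filter.mem_of_superset (Ioi_mem_nhds hx) fun y hy => hzero y (le_of_lt hy)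
    rw [hconst.deriv_eq, deriv_const]

variable {ψ : ℝ → ℝ} {r R : ℝ}

lemma abs_Psi_le_one (hψ : ∀ x, ψ x ∈ Set.Icc (0 : ℝ) 1) (r R : ℝ) (ξ : E3) :
    |Psi ψ r R ξ| ≤ 1 := by
  have hmem : Psi ψ r R ξ ∈ Set.Icc (0 : ℝ) 1 :=
    unitInterval.mul_mem (hψ _)
      (unitInterval.mul_mem (Set.Icc.mem_iff_one_sub_mem.mp (hψ _))
        (Set.Icc.mem_iff_one_sub_mem.mp (hψ _)))
  exact abs_le.mpr ⟨by linarith [hmem.1], hmem.2⟩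

lemma lipschitzWith_Psi {K : ℝ≥0} (hK : LipschitzWith K ψ)
    (hψ : ∀ x, ψ x ∈ Set.Icc (0 : ℝ) 1) (r R : ℝ) :
    LipschitzWith (K * ‖R⁻¹‖₊ + (K * ‖r⁻¹‖₊ + K * ‖r⁻¹‖₊)) (Psi ψ r R) := by
  have hψ_norm (x : ℝ) : ‖ψ x‖ ≤ 1 := by
    rw [Real.norm_eq_abs, abs_of_nonneg (hψ x).1]
    exact (hψ x).2
  have hsub_norm (x : ℝ) : ‖1 - ψ x‖ ≤ 1 := by
    rw [Real.norm_eq_abs, abs_of_nonneg (sub_nonneg.mpr (hψ x).2)]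
    exact sub_le_self _ (hψ x).1
  have hsub_lip : LipschitzWith K fun x => 1 - ψ x := by
    simpa only [zero_add] using (LipschitzWith.const 1).sub hK
  refine lipschitzWith_mul_of_norm_le_one (lipschitzWith_comp_div hK lipschitzWith_one_norm R)
    (lipschitzWith_mul_of_norm_le_one (lipschitzWith_comp_div hsub_lip lipschitzWith_xih r)
      (lipschitzWith_comp_div hsub_lip (lipschitzWith_abs_apply 2) r)
      (fun _ => hsub_norm _) fun _ => hsub_norm _)
    (fun _ => hψ_norm _) fun ξ => ?_
  exact (norm_mul_le_of_le (hsub_norm _) (hsub_norm _)).trans_eq (one_mul 1)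

lemma norm_fderiv_Psi_le {K : ℝ≥0} (hK : LipschitzWith K ψ)
    (hψ : ∀ x, ψ x ∈ Set.Icc (0 : ℝ) 1) (hr : 0 < r) (hrR : r ≤ R) (ξ : E3) :
    ‖fderiv ℝ (Psi ψ r R) ξ‖ ≤ 3 * K * r⁻¹ := by
  have hRinv : R⁻¹ ≤ r⁻¹ := inv_anti₀ hr hrR
  calc ‖fderiv ℝ (Psi ψ r R) ξ‖ ≤ K * R⁻¹ + (K * r⁻¹ + K * r⁻¹) := by
        simpa [abs_of_pos hr, abs_of_pos (hr.trans_le hrR)] using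
          norm_fderiv_le_of_lipschitz ℝ (lipschitzWith_Psi hK hψ r R) (x₀ := ξ)
    _ ≤ K * r⁻¹ + (K * r⁻¹ + K * r⁻¹) := by gcongr
    _ = 3 * K * r⁻¹ := by ring

lemma abs_fderiv_Psi_single_le {K : ℝ≥0} (hK : LipschitzWith K ψ)
    (hψ : ∀ x, ψ x ∈ Set.Icc (0 : ℝ) 1) (hr : 0 < r) (hrR : r ≤ R) (ξ : E3) (i : Fin 3) :
    |fderiv ℝ (Psi ψ r R) ξ (EuclideanSpace.single i 1)| ≤ 3 * K * r⁻¹ := by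
  have happly := (fderiv ℝ (Psi ψ r R) ξ).le_opNorm (EuclideanSpace.single i 1)
  rw [PiLp.norm_single, norm_one, mul_one, Real.norm_eq_abs] at happly
  exact happly.trans (norm_fderiv_Psi_le hK hψ hr hrR ξ)

lemma isClosed_CrR (r R : ℝ) : IsClosed (CrR r R) :=
  (isClosed_le continuous_norm continuous_const).inter
    ((isClosed_le continuous_const lipschitzWith_xih.continuous).inter
      (isClosed_le continuous_const (lipschitzWith_abs_apply 2).continuous))

lemma tsupport_Psi_subset (hone : ∀ x ≤ (1 : ℝ), ψ x = 1) (hzero : ∀ x, (2 : ℝ) ≤ x → ψ x = 0)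
    (hr : 0 < r) (hR : 0 < R) : tsupport (Psi ψ r R) ⊆ CrR r (2 * R) := by
  refine closure_minimal (fun ξ hξ => ?_) (isClosed_CrR r (2 * R))
  obtain ⟨hnorm, hxih, hthird⟩ :
      ψ (‖ξ‖ / R) ≠ 0 ∧ 1 - ψ (xih ξ / r) ≠ 0 ∧ 1 - ψ (|ξ 2| / r) ≠ 0 := by
    simpa only [Function.mem_support, Psi, mul_ne_zero_iff] using hξ
  refine ⟨?_, ?_, ?_⟩
  · contrapose! hnorm
    exact hzero _ ((le_div_iff₀ hR).mpr hnorm.le)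
  · contrapose! hxih
    rw [hone _ ((div_le_one hr).mpr hxih.le), sub_self]
  · contrapose! hthird
    rw [hone _ ((div_le_one hr).mpr hthird.le), sub_self]

end Cutoff

lemma abs_sub_le_abs_add_mul {a b ε : ℝ} (ha : 0 ≤ a) (hb : 0 ≤ b) (hε : |ε| = 1) :
    |a - b| ≤ |a + ε * b| := by
  rcases eq_or_eq_neg_of_abs_eq hε with rfl | rfl
  · rw [one_mul, abs_of_nonneg (add_nonneg ha hb), abs_le]
    constructor <;> linarith
  · rw [neg_one_mul, sub_eq_add_neg]

section Phase

local notation "e₂" => (EuclideanSpace.single 1 1 : E3)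

local notation "e₃" => (EuclideanSpace.single 2 1 : E3)

/-- The real function `p` with `a_λ = i ε₁ p` for `λ = λ_{ε₁,ε}`, written through the direction
cosines of `γξ ± e₃` along `e₂`. -/
def phaseSlope (γ ε : ℝ) (ξ : E3) : ℝ :=
  γ / 2 * (dirCos e₂ (γ • ξ + e₃) + ε * dirCos e₂ (γ • ξ - e₃))

variable {γ ε ε1 ε2 : ℝ} {ξ : E3}

lemma sqrt_eq_norm_smul_add (γ : ℝ) (ξ : E3) :
    Real.sqrt (1 + γ ^ 2 * ‖ξ‖ ^ 2 + 2 * γ * ξ 2) = ‖γ • ξ + e₃‖ := by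
  rw [← Real.sqrt_sq (norm_nonneg (γ • ξ + e₃)), norm_add_sq_real]
  simp only [norm_smul, mul_pow, Real.norm_eq_abs, sq_abs, PiLp.norm_single, abs_one,
    EuclideanSpace.inner_single_right, PiLp.smul_apply, smul_eq_mul, conj_trivial]
  congr 1
  ring

lemma sqrt_eq_norm_smul_sub (γ : ℝ) (ξ : E3) :
    Real.sqrt (1 + γ ^ 2 * ‖ξ‖ ^ 2 - 2 * γ * ξ 2) = ‖γ • ξ - e₃‖ := by
  have h := sqrt_eq_norm_smul_add (-γ) ξ
  rw [neg_smul, neg_add_eq_sub, norm_sub_rev] at h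
  rw [← h]
  congr 1
  ring

lemma phaseSlope_eq (γ ε : ℝ) (ξ : E3) :
    phaseSlope γ ε ξ = γ ^ 2 * ξ 1 / 2 * (‖γ • ξ + e₃‖⁻¹ + ε * ‖γ • ξ - e₃‖⁻¹) := by
  have h12 : (1 : Fin 3) ≠ 2 := by decide
  simp only [phaseSlope, dirCos, EuclideanSpace.inner_single_left, PiLp.add_apply,
    PiLp.sub_apply, PiLp.smul_apply, PiLp.single_eq_of_ne 2 h12, smul_eq_mul, map_one, one_mul,
    add_zero, sub_zero]
  ring

lemma aLam_eq_phaseSlope_smul (γ ε1 ε2 : ℝ) :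
    aLam γ ε1 ε2 = fun ξ => phaseSlope γ ε2 ξ • ((ε1 : ℂ) * Complex.I) := by
  funext ξ
  rw [aLam, sqrt_eq_norm_smul_add, sqrt_eq_norm_smul_sub, phaseSlope_eq, Complex.real_smul]
  push_cast
  ring

lemma norm_aLam (h1 : |ε1| = 1) (γ ε2 : ℝ) (ξ : E3) :
    ‖aLam γ ε1 ε2 ξ‖ = |phaseSlope γ ε2 ξ| := by
  simp [aLam_eq_phaseSlope_smul, h1]

lemma abs_phaseSlope_le (hγ : 0 ≤ γ) (hε : |ε| ≤ 1) (ξ : E3) : |phaseSlope γ ε ξ| ≤ γ := by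
  have hcos (x : E3) : |dirCos e₂ x| ≤ 1 := by
    simpa using abs_dirCos_le e₂ x
  calc |phaseSlope γ ε ξ|
      ≤ γ / 2 * (|dirCos e₂ (γ • ξ + e₃)| + |ε| * |dirCos e₂ (γ • ξ - e₃)|) := by
        rw [phaseSlope, abs_mul, abs_of_nonneg (div_nonneg hγ zero_le_two), ← abs_mul ε]
        gcongr
        exact abs_add_le _ _
    _ ≤ γ / 2 * (1 + 1 * 1) := by gcongr <;> exact hcos _
    _ = γ := by ring

lemma norm_aLam_le (hγ : 0 ≤ γ) (h1 : |ε1| = 1) (h2 : |ε2| ≤ 1) (ξ : E3) :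
    ‖aLam γ ε1 ε2 ξ‖ ≤ γ := by
  rw [norm_aLam h1]
  exact abs_phaseSlope_le hγ h2 ξ

lemma mul_xih_le_norm_smul_add (γ s : ℝ) (ξ : E3) : |γ| * xih ξ ≤ ‖γ • ξ + s • e₃‖ := by
  calc |γ| * xih ξ = xih (γ • ξ + s • e₃) := by
        simp [xih, mul_pow, ← mul_add, Real.sqrt_mul (sq_nonneg γ), Real.sqrt_sq_eq_abs]
    _ ≤ ‖γ • ξ + s • e₃‖ := xih_le_norm _

lemma mul_xih_le_norm_smul_add_single (hγ : 0 ≤ γ) (ξ : E3) : γ * xih ξ ≤ ‖γ • ξ + e₃‖ := by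
  simpa [abs_of_nonneg hγ] using mul_xih_le_norm_smul_add γ 1 ξ

lemma mul_xih_le_norm_smul_sub_single (hγ : 0 ≤ γ) (ξ : E3) : γ * xih ξ ≤ ‖γ • ξ - e₃‖ := by
  simpa [sub_eq_add_neg, abs_of_nonneg hγ] using mul_xih_le_norm_smul_add γ (-1) ξ

lemma smul_add_single_ne_zero (hγ : 0 < γ) (hξ : 0 < xih ξ) : γ • ξ + e₃ ≠ 0 :=
  norm_pos_iff.mp ((mul_pos hγ hξ).trans_le (mul_xih_le_norm_smul_add_single hγ.le ξ))

lemma smul_sub_single_ne_zero (hγ : 0 < γ) (hξ : 0 < xih ξ) : γ • ξ - e₃ ≠ 0 :=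
  norm_pos_iff.mp ((mul_pos hγ hξ).trans_le (mul_xih_le_norm_smul_sub_single hγ.le ξ))

lemma hasFDerivAt_phaseSlope (ε : ℝ) (hadd : γ • ξ + e₃ ≠ 0) (hsub : γ • ξ - e₃ ≠ 0) :
    HasFDerivAt (phaseSlope γ ε)
      ((γ / 2) • (fderiv ℝ (fun η => dirCos e₂ (γ • η + e₃)) ξ +
        ε • fderiv ℝ (fun η => dirCos e₂ (γ • η - e₃)) ξ)) ξ := by
  rw [sub_eq_add_neg] at hsub
  have hdiff := (differentiableAt_dirCos_smul_add e₂ hsub).hasFDerivAt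
  simp only [← sub_eq_add_neg] at hdiff
  exact ((differentiableAt_dirCos_smul_add e₂ hadd).hasFDerivAt.add
    (hdiff.const_mul ε)).const_mul (γ / 2)

lemma abs_fderiv_phaseSlope_le (hγ : 0 < γ) (hε : |ε| ≤ 1) (hξ : 0 < xih ξ) :
    |fderiv ℝ (phaseSlope γ ε) ξ e₂| ≤ γ / xih ξ := by
  have hbound {e : E3} (he : γ * xih ξ ≤ ‖γ • ξ + e‖) :
      |fderiv ℝ (fun η => dirCos e₂ (γ • η + e)) ξ e₂| ≤ 1 / xih ξ := by
    have hne : γ • ξ + e ≠ 0 := norm_pos_iff.mp ((mul_pos hγ hξ).trans_le he)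
    calc |fderiv ℝ (fun η => dirCos e₂ (γ • η + e)) ξ e₂|
        ≤ |γ| * (‖e₂‖ ^ 2 / ‖γ • ξ + e‖) := abs_fderiv_dirCos_smul_add_le hne
      _ ≤ γ * (1 / (γ * xih ξ)) := by
          simp only [abs_of_pos hγ, PiLp.norm_single, norm_one, one_pow]
          gcongr
      _ = 1 / xih ξ := by field_simp
  have hadd := hbound (mul_xih_le_norm_smul_add_single hγ.le ξ)
  have hsub : |fderiv ℝ (fun η => dirCos e₂ (γ • η - e₃)) ξ e₂| ≤ 1 / xih ξ := by
    simpa only [sub_eq_add_neg] using hbound (e := -e₃)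
      (by simpa only [sub_eq_add_neg] using mul_xih_le_norm_smul_sub_single hγ.le ξ)
  rw [(hasFDerivAt_phaseSlope ε (smul_add_single_ne_zero hγ hξ)
    (smul_sub_single_ne_zero hγ hξ)).fderiv]
  calc |γ / 2 * (fderiv ℝ (fun η => dirCos e₂ (γ • η + e₃)) ξ e₂ +
          ε * fderiv ℝ (fun η => dirCos e₂ (γ • η - e₃)) ξ e₂)|
      ≤ γ / 2 * (|fderiv ℝ (fun η => dirCos e₂ (γ • η + e₃)) ξ e₂| +
          |ε| * |fderiv ℝ (fun η => dirCos e₂ (γ • η - e₃)) ξ e₂|) := by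
        rw [abs_mul, abs_of_pos (half_pos hγ), ← abs_mul ε]
        gcongr
        exact abs_add_le _ _
    _ ≤ γ / 2 * (1 / xih ξ + 1 * (1 / xih ξ)) := by gcongr
    _ = γ / xih ξ := by ring

lemma norm_fderiv_aLam_le (hγ : 0 < γ) (h1 : |ε1| = 1) (h2 : |ε2| ≤ 1) (hξ : 0 < xih ξ) :
    ‖fderiv ℝ (aLam γ ε1 ε2) ξ e₂‖ ≤ γ / xih ξ := by
  have hdiff : DifferentiableAt ℝ (phaseSlope γ ε2) ξ :=
    (hasFDerivAt_phaseSlope ε2 (smul_add_single_ne_zero hγ hξ)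
      (smul_sub_single_ne_zero hγ hξ)).differentiableAt
  rw [aLam_eq_phaseSlope_smul, fderiv_smul_const hdiff]
  simpa [norm_smul, h1] using abs_fderiv_phaseSlope_le hγ h2 hξ

lemma norm_fderiv_aLam_le_inv {r ρ : ℝ} (hγ : 0 < γ) (h1 : |ε1| = 1) (h2 : |ε2| ≤ 1)
    (hr : 0 < r) (hξ : ξ ∈ CrR r ρ) : ‖fderiv ℝ (aLam γ ε1 ε2) ξ e₂‖ ≤ γ * r⁻¹ := by
  obtain ⟨-, hxih, -⟩ := hξ
  calc ‖fderiv ℝ (aLam γ ε1 ε2) ξ e₂‖ ≤ γ / xih ξ :=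
        norm_fderiv_aLam_le hγ h1 h2 (hr.trans_le hxih)
    _ ≤ γ * r⁻¹ := by
        rw [← div_eq_mul_inv]
        gcongr

lemma le_abs_phaseSlope (hγ : 0 ≤ γ) (hε : |ε| = 1) (ξ : E3) :
    γ ^ 3 * |ξ 1| * |ξ 2| / (1 + γ * ‖ξ‖) ^ 3 ≤ |phaseSlope γ ε ξ| := by
  rcases eq_or_ne (γ * ξ 1) 0 with h0 | h0
  · rcases mul_eq_zero.mp h0 with h | h <;> simp [h]
  have hadd : γ • ξ + e₃ ≠ 0 := fun h => h0 (by simpa using congrArg (· 1) h)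
  have hsub : γ • ξ - e₃ ≠ 0 := fun h => h0 (by simpa using congrArg (· 1) h)
  have hinv : 2 * (γ * |ξ 2|) / (1 + γ * ‖ξ‖) ^ 3 ≤ |‖γ • ξ + e₃‖⁻¹ - ‖γ • ξ - e₃‖⁻¹| := by
    simpa [norm_smul, abs_mul, abs_of_nonneg hγ, add_comm, EuclideanSpace.inner_single_right] using
      le_abs_inv_norm_add_sub_inv_norm_sub hadd hsub
  calc γ ^ 3 * |ξ 1| * |ξ 2| / (1 + γ * ‖ξ‖) ^ 3
      = γ ^ 2 * |ξ 1| / 2 * (2 * (γ * |ξ 2|) / (1 + γ * ‖ξ‖) ^ 3) := by ring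
    _ ≤ γ ^ 2 * |ξ 1| / 2 * |‖γ • ξ + e₃‖⁻¹ + ε * ‖γ • ξ - e₃‖⁻¹| := by
        gcongr
        exact hinv.trans (abs_sub_le_abs_add_mul (by positivity) (by positivity) hε)
    _ = |phaseSlope γ ε ξ| := by
        rw [phaseSlope_eq, abs_mul, abs_div, abs_mul, abs_two, abs_of_nonneg (sq_nonneg γ)]

lemma le_norm_aLam_of_mem_CrR {r ρ : ℝ} (hγ : 0 ≤ γ) (h1 : |ε1| = 1) (h2 : |ε2| = 1)
    (hr : 0 ≤ r) (hξ : ξ ∈ CrR r ρ) : (γ / (1 + γ * ρ)) ^ 3 * (r * |ξ 1|) ≤ ‖aLam γ ε1 ε2 ξ‖ := by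
  obtain ⟨hnorm, -, hthird⟩ := hξ
  have hρ : 0 ≤ ρ := (norm_nonneg ξ).trans hnorm
  calc (γ / (1 + γ * ρ)) ^ 3 * (r * |ξ 1|)
      ≤ (γ / (1 + γ * ‖ξ‖)) ^ 3 * (|ξ 2| * |ξ 1|) := by gcongr
    _ = γ ^ 3 * |ξ 1| * |ξ 2| / (1 + γ * ‖ξ‖) ^ 3 := by rw [div_pow]; ring
    _ ≤ ‖aLam γ ε1 ε2 ξ‖ := by
        rw [norm_aLam h1]
        exact le_abs_phaseSlope hγ h2 ξ

end Phase

section Kernel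

local notation "e₂" => (EuclideanSpace.single 1 1 : E3)

lemma norm_Mker_le {ψ : ℝ → ℝ} {r R γ ε1 ε2 τ : ℝ} {ξ : E3} (hτ : 0 ≤ τ)
    (hΨ : |Psi ψ r R ξ| ≤ 1) :
    ‖Mker ψ r R γ ε1 ε2 τ ξ‖ ≤
      (1 + ‖fderiv ℝ (aLam γ ε1 ε2) ξ e₂‖ +
        ‖aLam γ ε1 ε2 ξ‖ * |fderiv ℝ (Psi ψ r R) ξ e₂|) / (1 + τ * ‖aLam γ ε1 ε2 ξ‖ ^ 2) := by
  have hT : 0 ≤ τ * ‖aLam γ ε1 ε2 ξ‖ ^ 2 := by positivity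
  rw [Mker]
  generalize τ * ‖aLam γ ε1 ε2 ξ‖ ^ 2 = T at hT
  have hquot : |(1 - T) / (1 + T) ^ 2| ≤ 1 / (1 + T) := by
    have hnum : |1 - T| ≤ 1 + T := abs_le.mpr ⟨by linarith, by linarith⟩
    rw [abs_div, abs_of_pos (by positivity : 0 < (1 + T) ^ 2), pow_two, ← div_div]
    gcongr
    exact div_le_one_of_le₀ hnum (by positivity)
  calc _ ≤ (|1 / (1 + T)| + ‖fderiv ℝ (aLam γ ε1 ε2) ξ e₂‖ * |(1 - T) / (1 + T) ^ 2|) *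
          |Psi ψ r R ξ| + ‖aLam γ ε1 ε2 ξ‖ / |1 + T| * |fderiv ℝ (Psi ψ r R) ξ e₂| := by
        refine (norm_add_le _ _).trans (add_le_add ?_ ?_)
        · rw [norm_mul, Complex.norm_real, Real.norm_eq_abs]
          gcongr
          refine (norm_add_le _ _).trans_eq ?_
          simp only [norm_mul, Complex.norm_I, one_mul, Complex.norm_real, Real.norm_eq_abs]
        · simp only [norm_mul, norm_div, Complex.norm_I, one_mul, Complex.norm_real,
            Real.norm_eq_abs, le_refl]
    _ ≤ (1 / (1 + T) + ‖fderiv ℝ (aLam γ ε1 ε2) ξ e₂‖ * (1 / (1 + T))) * 1 +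
          ‖aLam γ ε1 ε2 ξ‖ / (1 + T) * |fderiv ℝ (Psi ψ r R) ξ e₂| := by
        rw [abs_of_pos (by positivity : 0 < 1 / (1 + T)), abs_of_pos (by positivity : 0 < 1 + T)]
        gcongr
    _ = _ := by ring

lemma Mker_eq_zero_of_notMem_tsupport {ψ : ℝ → ℝ} {r R : ℝ} {ξ : E3}
    (hξ : ξ ∉ tsupport (Psi ψ r R)) (γ ε1 ε2 τ : ℝ) : Mker ψ r R γ ε1 ε2 τ ξ = 0 := by
  simp [Mker, image_eq_zero_of_notMem_tsupport hξ, fderiv_of_notMem_tsupport ℝ hξ]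

lemma inv_one_add_mul_sq_le {κ a b τ : ℝ} (hκ : 0 < κ) (hκ1 : κ ≤ 1) (hτ : 0 ≤ τ) (hb : 0 ≤ b)
    (h : κ * b ≤ a) : (1 + τ * a ^ 2)⁻¹ ≤ (κ ^ 2)⁻¹ / (1 + τ * b ^ 2) := by
  rw [div_eq_mul_inv, ← mul_inv]
  refine inv_anti₀ (by positivity) ?_
  calc κ ^ 2 * (1 + τ * b ^ 2) = κ ^ 2 + τ * (κ * b) ^ 2 := by ring
    _ ≤ 1 + τ * a ^ 2 := by
        gcongr
        exact pow_le_one₀ hκ.le hκ1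

lemma inv_one_add_mul_sq_norm_aLam_le {γ ε1 ε2 τ r R : ℝ} {ξ : E3} (hγ : 0 < γ)
    (h1 : |ε1| = 1) (h2 : |ε2| = 1) (hr : 0 ≤ r) (hR : 1 ≤ R) (hτ : 0 ≤ τ)
    (hξ : ξ ∈ CrR r (2 * R)) :
    (1 + τ * ‖aLam γ ε1 ε2 ξ‖ ^ 2)⁻¹ ≤
      (((γ / (1 + 2 * γ)) ^ 3) ^ 2)⁻¹ / (1 + R ^ (-(6 : ℝ)) * r ^ 2 * τ * ξ 1 ^ 2) := by
  have hR0 : 0 < R := one_pos.trans_le hR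
  have hκ : γ / (1 + 2 * γ) ≤ 1 := (div_le_one (by positivity)).mpr (by linarith)
  have hlower : (γ / (1 + 2 * γ)) ^ 3 * (r * |ξ 1| / R ^ 3) ≤ ‖aLam γ ε1 ε2 ξ‖ :=
    calc (γ / (1 + 2 * γ)) ^ 3 * (r * |ξ 1| / R ^ 3)
        = (γ / (R + 2 * γ * R)) ^ 3 * (r * |ξ 1|) := by field_simp
      _ ≤ (γ / (1 + γ * (2 * R))) ^ 3 * (r * |ξ 1|) := by
        gcongr ?_ ^ 3 * _
        exact div_le_div_of_nonneg_left hγ.le (by positivity) (by linarith)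
      _ ≤ ‖aLam γ ε1 ε2 ξ‖ := le_norm_aLam_of_mem_CrR hγ.le h1 h2 hr hξ
  have hpow : R ^ (-(6 : ℝ)) * r ^ 2 * τ * ξ 1 ^ 2 = τ * (r * |ξ 1| / R ^ 3) ^ 2 := by
    rw [Real.rpow_neg hR0.le, show (6 : ℝ) = (6 : ℕ) by norm_num, Real.rpow_natCast, div_pow,
      mul_pow, sq_abs]
    ring
  rw [hpow]
  exact inv_one_add_mul_sq_le (by positivity) (pow_le_one₀ (by positivity) hκ) hτ
    (by positivity) hlower

end Kernel

/-- For `0 < r ≤ 1 ≤ R`, `τ > 0` and each phase `λ = λ_{ε₁,ε₂}`,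
`|M(τ,ξ)| ≤ C r^{−1}/(1 + R^{−6} r² τ ξ₂²)` for all `ξ` with `ξ_h ≠ 0`, where `C`
depends only on `γ̄` and `ψ`. -/
theorem Mker_bound (γ : ℝ) (hγ : 0 < γ) (ψ : ℝ → ℝ) (hψ : IsCutoff ψ) :
    ∃ C : ℝ, 0 < C ∧
      ∀ r R τ : ℝ, 0 < r → r ≤ 1 → 1 ≤ R → 0 < τ →
      ∀ ε1 ε2 : ℝ, (ε1 = 1 ∨ ε1 = -1) → (ε2 = 1 ∨ ε2 = -1) →
      ∀ ξ : E3, ¬(ξ 0 = 0 ∧ ξ 1 = 0) →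
        ‖Mker ψ r R γ ε1 ε2 τ ξ‖ ≤
          C * r⁻¹ / (1 + R ^ (-(6:ℝ)) * r ^ 2 * τ * (ξ 1) ^ 2) := by
  obtain ⟨K, hK⟩ := exists_lipschitzWith_of_isCutoff hψ
  obtain ⟨-, hmem, hone, hzero⟩ := hψ
  refine ⟨(1 + γ + γ * (3 * K)) * (((γ / (1 + 2 * γ)) ^ 3) ^ 2)⁻¹, by positivity, ?_⟩
  intro r R τ hr hr1 hR hτ ε1 ε2 hε1 hε2 ξ _
  have hR0 : 0 < R := one_pos.trans_le hR
  replace hε1 : |ε1| = 1 := (abs_eq zero_le_one).mpr hε1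
  replace hε2 : |ε2| = 1 := (abs_eq zero_le_one).mpr hε2
  by_cases hξ : ξ ∈ tsupport (Psi ψ r R)
  · have hCrR := tsupport_Psi_subset hone hzero hr hR0 hξ
    have hslope := norm_aLam_le hγ.le hε1 hε2.le ξ
    have hslope' := norm_fderiv_aLam_le_inv hγ hε1 hε2.le hr hCrR
    have hΨ' := abs_fderiv_Psi_single_le hK hmem hr (hr1.trans hR) ξ 1
    calc ‖Mker ψ r R γ ε1 ε2 τ ξ‖ ≤ _ := norm_Mker_le hτ.le (abs_Psi_le_one hmem r R ξ)
      _ ≤ (r⁻¹ + γ * r⁻¹ + γ * (3 * K * r⁻¹)) * (1 + τ * ‖aLam γ ε1 ε2 ξ‖ ^ 2)⁻¹ := by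
        rw [div_eq_mul_inv]
        gcongr
        exact (one_le_inv₀ hr).mpr hr1
      _ ≤ (r⁻¹ + γ * r⁻¹ + γ * (3 * K * r⁻¹)) * ((((γ / (1 + 2 * γ)) ^ 3) ^ 2)⁻¹ /
            (1 + R ^ (-(6 : ℝ)) * r ^ 2 * τ * ξ 1 ^ 2)) := by
        gcongr
        exact inv_one_add_mul_sq_norm_aLam_le hγ hε1 hε2 hr.le hR hτ.le hCrR
      _ = _ := by ring
  · rw [Mker_eq_zero_of_notMem_tsupport hξ, norm_zero]
    positivity
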